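/- arXiv:2407.19640 — 2 statements merged into one kernel-verified Lean document; each statement's English description precedes it below -/
import Mathlib

section
/- Let ρ, τ > 0 and ω > 0. The purely imaginary number λ = iω is a root of the characteristic equation λ + ρ e^{−λτ} = 0 if and only if ω = ρ and there exists a nonnegative integer m with ρτ = π/2 + 2mπ. In particular, the smallest value of ρτ at which a purely imaginary characteristic root exists (where the Hopf bifurcation of the delay logistic equation takes place) is ρτ = π/2. -/
/-!
Separating real and imaginary parts, `iω` is a root iff `ρ cos (ωτ) = 0` and `ω = ρ sin (ωτ)`
(`root_iff_cos_sin`). The first equation forces `sin (ωτ) = ±1`, and positivity of `ω` and `ρ`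
selects `+1`, so `ω = ρ` and `ρτ ∈ π/2 + 2πℤ`; since `ρτ > 0`, the integer is nonnegative
(`root_iff`). The least admissible `ρτ` is then the one with `m = 0`, attained at
`ρ = ω = 1`, `τ = π/2`.
-/

lemma root_iff_cos_sin (ρ τ ω : ℝ) :
    Complex.I * (ω : ℂ) + (ρ : ℂ) * Complex.exp (-(Complex.I * (ω : ℂ)) * (τ : ℂ)) = 0 ↔
      ρ * Real.cos (ω * τ) = 0 ∧ ω = ρ * Real.sin (ω * τ) := by
  have h : -(Complex.I * (ω : ℂ)) * (τ : ℂ) = ((-(ω * τ) : ℝ) : ℂ) * Complex.I := by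
    push_cast
    ring
  rw [h, Complex.ext_iff]
  simp only [Complex.add_re, Complex.add_im, Complex.mul_re, Complex.mul_im, Complex.I_re,
    Complex.I_im, Complex.ofReal_re, Complex.ofReal_im, Complex.exp_ofReal_mul_I_re,
    Complex.exp_ofReal_mul_I_im, Real.cos_neg, Real.sin_neg, Complex.zero_re, Complex.zero_im]
  constructor
  · rintro ⟨h1, h2⟩
    constructor <;> linarith
  · rintro ⟨h1, h2⟩
    constructor <;> linarith

lemma root_iff {ρ τ ω : ℝ} (hρ : 0 < ρ) (hτ : 0 < τ) (hω : 0 < ω) :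
    Complex.I * (ω : ℂ) + (ρ : ℂ) * Complex.exp (-(Complex.I * (ω : ℂ)) * (τ : ℂ)) = 0 ↔
      ω = ρ ∧ ∃ m : ℕ, ρ * τ = Real.pi / 2 + 2 * (m : ℝ) * Real.pi := by
  rw [root_iff_cos_sin]
  constructor
  · rintro ⟨hc, hs⟩
    have hcos : Real.cos (ω * τ) = 0 := (mul_eq_zero.mp hc).resolve_left hρ.ne'
    have hpos : 0 < Real.sin (ω * τ) := pos_of_mul_pos_right (hs ▸ hω) hρ.le
    have hsin : Real.sin (ω * τ) = 1 := by
      have hsq := Real.sin_sq_add_cos_sq (ω * τ)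
      rw [hcos] at hsq
      nlinarith
    have hωρ : ω = ρ := by rw [hs, hsin, mul_one]
    refine ⟨hωρ, ?_⟩
    obtain ⟨k, hk⟩ := Real.sin_eq_one_iff.mp hsin
    rw [hωρ] at hk
    -- A negative `k` would give `ρτ ≤ π/2 - 2π < 0`.
    have hk0 : 0 ≤ k := by
      by_contra! hneg
      have hk1 : (k : ℝ) ≤ -1 := by exact_mod_cast Int.le_sub_one_of_lt hneg
      nlinarith [Real.pi_pos, mul_pos hρ hτ]
    lift k to ℕ using hk0
    refine ⟨k, ?_⟩
    rw [← hk]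
    push_cast
    ring
  · rintro ⟨rfl, m, hm⟩
    have hsin : Real.sin (ω * τ) = 1 :=
      Real.sin_eq_one_iff.mpr ⟨m, by rw [hm]; push_cast; ring⟩
    have hcos : Real.cos (ω * τ) = 0 := by
      have hsq := Real.sin_sq_add_cos_sq (ω * τ)
      rw [hsin] at hsq
      exact pow_eq_zero_iff two_ne_zero |>.mp (by linarith)
    rw [hsin, hcos]
    simp

/-- For `ρ, τ, ω > 0`, the purely imaginary number `λ = iω` is a root of the
characteristic equation `λ + ρ e^{-λτ} = 0` if and only if `ω = ρ` and
`ρτ = π/2 + 2mπ` for some nonnegative integer `m`. In particular, the smallest value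
of `ρτ` at which a purely imaginary characteristic root exists (where the Hopf
bifurcation of the delay logistic equation takes place) is `ρτ = π/2`. -/
theorem characteristic_equation_imaginary_root
    (ρ τ ω : ℝ) (hρ : 0 < ρ) (hτ : 0 < τ) (hω : 0 < ω) :
    ((Complex.I * (ω : ℂ) + (ρ : ℂ) * Complex.exp (-(Complex.I * (ω : ℂ)) * (τ : ℂ)) = 0) ↔
      (ω = ρ ∧ ∃ m : ℕ, ρ * τ = Real.pi / 2 + 2 * (m : ℝ) * Real.pi)) ∧
    IsLeast {c : ℝ | ∃ ρ' τ' ω' : ℝ, 0 < ρ' ∧ 0 < τ' ∧ 0 < ω' ∧ ρ' * τ' = c ∧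
        Complex.I * (ω' : ℂ) + (ρ' : ℂ) * Complex.exp (-(Complex.I * (ω' : ℂ)) * (τ' : ℂ)) = 0}
      (Real.pi / 2) := by
  refine ⟨root_iff hρ hτ hω, ?_, ?_⟩
  · have hπ : 0 < Real.pi / 2 := by positivity
    exact ⟨1, Real.pi / 2, 1, one_pos, hπ, one_pos, one_mul _,
      (root_iff one_pos hπ one_pos).mpr ⟨rfl, 0, by simp⟩⟩
  · rintro c ⟨ρ', τ', ω', hρ', hτ', hω', rfl, hroot⟩
    obtain ⟨-, m, hm⟩ := (root_iff hρ' hτ' hω').mp hroot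
    rw [hm]
    have : 0 ≤ 2 * (m : ℝ) * Real.pi := by positivity
    linarith
end

section
/- Let ρ, τ > 0 with ρτ < π/2. Then every complex root λ of the characteristic equation λ + ρ e^{−λτ} = 0 satisfies Re λ < 0. -/
/-- For `ρ, τ > 0` with `ρτ < π/2`, every complex root `λ` of the characteristic
equation `λ + ρ e^{-λτ} = 0` of the delay logistic equation linearized at the
equilibrium `x̄ = 1` has negative real part. -/
theorem characteristic_equation_roots_negative_real_part
    (ρ τ : ℝ) (hρ : 0 < ρ) (hτ : 0 < τ) (h : ρ * τ < Real.pi / 2) :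
    ∀ lam : ℂ, lam + (ρ : ℂ) * Complex.exp (-lam * (τ : ℂ)) = 0 → lam.re < 0 := by
  intro lam hlam
  by_contra! hx
  -- If `Re λ ≥ 0`, then `|Im λ| ≤ |λ| = ρ e^{-τ Re λ} ≤ ρ`, so `|τ Im λ| < π/2`; the real part
  -- `Re λ + ρ e^{-τ Re λ} cos (τ Im λ)` of the equation is then positive.
  have hre := congrArg Complex.re hlam
  have hnorm : ‖lam‖ = ρ * Real.exp (-(lam.re * τ)) := by
    rw [eq_neg_of_add_eq_zero_left hlam, norm_neg, norm_mul, Complex.norm_exp,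
      ← eq_neg_of_add_eq_zero_left hlam]
    simp [abs_of_pos hρ]
  have hexp : Real.exp (-(lam.re * τ)) ≤ 1 :=
    Real.exp_le_one_iff.mpr (neg_nonpos.mpr (mul_nonneg hx hτ.le))
  have him : |lam.im| ≤ ρ :=
    (Complex.abs_im_le_norm lam).trans (hnorm.trans_le (mul_le_of_le_one_right hρ.le hexp))
  have hy : |lam.im * τ| < Real.pi / 2 := by
    rw [abs_mul, abs_of_pos hτ]
    exact (mul_le_mul_of_nonneg_right him hτ.le).trans_lt h
  have hcos : 0 < Real.cos (lam.im * τ) := Real.cos_pos_of_mem_Ioo (abs_lt.mp hy)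
  simp [Complex.exp_re] at hre
  have := mul_pos hρ (mul_pos (Real.exp_pos (-(lam.re * τ))) hcos)
  linarith
end
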